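/- Let 𝔸 be an ω-categorical model-complete core that is preserved by a chain of quasi Jónsson operations (J_1,…,J_{2n+1}). Then for every finite subset B of the domain of 𝔸 there exists a chain of quasi Jónsson operations (J′_1,…,J′_{2n+1}) consisting of polymorphisms of 𝔸 such that every J′_i is idempotent on B, i.e., J′_i(b,b,b) = b for all b ∈ B. -/

import Mathlib

/-!
Common framework: relational structures, orbits, neoliberal permutation groups,
finite duality / finite boundedness, primitive-positive definability, implications,
implication graphs, quasi Jónsson chains, CSP instances and relational width.
-/

/-- A relational structure on domain `A`, given by its set of finitary relations. -/
structure RelStruct (A : Type) where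
  rels : Set (Σ n : ℕ, Set (Fin n → A))

namespace CSP

variable {A : Type}

/-- `g` is an automorphism of `𝔸`: it preserves every relation in both directions. -/
def IsAut (𝔸 : RelStruct A) (g : Equiv.Perm A) : Prop :=
  ∀ r ∈ 𝔸.rels, ∀ t : Fin r.1 → A, t ∈ r.2 ↔ (fun i => g (t i)) ∈ r.2

/-- The orbit of a `k`-tuple under a permutation group. -/
def orbitOf (G : Subgroup (Equiv.Perm A)) {k : ℕ} (t : Fin k → A) : Set (Fin k → A) :=
  {s | ∃ g ∈ G, s = fun i => g (t i)}

/-- `O` is an orbit of `k`-tuples under `G`. -/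
def IsOrbit (G : Subgroup (Equiv.Perm A)) {k : ℕ} (O : Set (Fin k → A)) : Prop :=
  ∃ t, O = orbitOf G t

/-- `G` is oligomorphic: finitely many orbits of `k`-tuples for every `k`. -/
def Oligomorphic (G : Subgroup (Equiv.Perm A)) : Prop :=
  ∀ k : ℕ, {O : Set (Fin k → A) | IsOrbit G O}.Finite

/-- `G` has exactly one orbit on injective `m`-tuples. -/
def IsTransitiveOn (G : Subgroup (Equiv.Perm A)) (m : ℕ) : Prop :=
  ∀ s t : Fin m → A, Function.Injective s → Function.Injective t →
    ∃ g ∈ G, ∀ i, g (s i) = t i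

/-- `G` is `k`-homogeneous: for every `ℓ ≥ k` the orbit of an `ℓ`-tuple is determined
by the orbits of its `k`-subtuples. -/
def IsHomogeneousAt (G : Subgroup (Equiv.Perm A)) (k : ℕ) : Prop :=
  ∀ ℓ : ℕ, k ≤ ℓ → ∀ s t : Fin ℓ → A,
    (∀ σ : Fin k → Fin ℓ, ∃ g ∈ G, ∀ i, g (s (σ i)) = t (σ i)) →
    ∃ g ∈ G, ∀ i, g (s i) = t i

/-- `G` has no `k`-algebraicity: the only points fixed by the pointwise stabilizer of any
`k-1` elements are those elements themselves. -/
def NoAlgebraicity (G : Subgroup (Equiv.Perm A)) (k : ℕ) : Prop :=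
  ∀ (t : Fin (k - 1) → A) (a : A),
    (∀ g ∈ G, (∀ i, g (t i) = t i) → g a = a) → ∃ i, a = t i

/-- `G` is `k`-neoliberal. -/
def IsNeoliberal (G : Subgroup (Equiv.Perm A)) (k : ℕ) : Prop :=
  Oligomorphic G ∧ IsTransitiveOn G (k - 1) ∧ IsHomogeneousAt G k ∧ NoAlgebraicity G k

/-- The canonical `k`-ary structure of `G`: its relations are exactly the orbits of
`k`-tuples under `G`. -/
def canonicalRelStruct (G : Subgroup (Equiv.Perm A)) (k : ℕ) : RelStruct A :=
  ⟨{r | ∃ O : Set (Fin k → A), IsOrbit G O ∧ r = ⟨k, O⟩}⟩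

/-- A relation is invariant under the group `G` (the semantic counterpart of
first-order definability over the ω-categorical canonical structure of `G`). -/
def GInvariant (G : Subgroup (Equiv.Perm A)) {n : ℕ} (R : Set (Fin n → A)) : Prop :=
  ∀ g ∈ G, ∀ t ∈ R, (fun i => g (t i)) ∈ R

/-- `𝔸` is an expansion of the canonical `k`-ary structure of `G` by first-order
definable (= `G`-invariant) relations. -/
def IsFOExpansion (G : Subgroup (Equiv.Perm A)) (k : ℕ) (𝔸 : RelStruct A) : Prop :=
  (canonicalRelStruct G k).rels ⊆ 𝔸.rels ∧ ∀ r ∈ 𝔸.rels, GInvariant G r.2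

/-! ### Structures in the signature of the canonical `k`-ary structure -/

/-- A structure with `k`-ary relation symbols indexed by `ι`, on domain `X`. -/
structure SigStructOn (ι : Type) (k : ℕ) (X : Type) where
  rel : ι → Set (Fin k → X)

/-- The index type of the relations of the canonical `k`-ary structure. -/
def OrbIdx (G : Subgroup (Equiv.Perm A)) (k : ℕ) := {O : Set (Fin k → A) // IsOrbit G O}

/-- The canonical `k`-ary structure of `G`, viewed as a structure in its own signature. -/
def canonicalOn (G : Subgroup (Equiv.Perm A)) (k : ℕ) : SigStructOn (OrbIdx G k) k A :=
  ⟨fun O => O.val⟩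

/-- Homomorphism of structures in a common signature. -/
def IsHomOn {ι X Y : Type} {k : ℕ} (S : SigStructOn ι k X) (T : SigStructOn ι k Y)
    (h : X → Y) : Prop :=
  ∀ i : ι, ∀ t ∈ S.rel i, (fun j => h (t j)) ∈ T.rel i

/-- Embedding of structures in a common signature. -/
def IsEmbOn {ι X Y : Type} {k : ℕ} (S : SigStructOn ι k X) (T : SigStructOn ι k Y)
    (h : X → Y) : Prop :=
  Function.Injective h ∧ ∀ i : ι, ∀ t : Fin k → X, t ∈ S.rel i ↔ (fun j => h (t j)) ∈ T.rel i

/-- The canonical `k`-ary structure of `G` has finite duality. -/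
def HasFiniteDuality (G : Subgroup (Equiv.Perm A)) (k : ℕ) : Prop :=
  ∃ F : Set ((X : Type) × SigStructOn (OrbIdx G k) k X),
    F.Finite ∧ (∀ p ∈ F, Finite p.1) ∧
      ∀ (X : Type), Finite X → ∀ SX : SigStructOn (OrbIdx G k) k X,
        ((∃ h : X → A, IsHomOn SX (canonicalOn G k) h) ↔
          ∀ p ∈ F, ¬ ∃ h : p.1 → X, IsHomOn p.2 SX h)

/-- `F` witnesses finite boundedness of the canonical `k`-ary structure of `G`. -/
def FinBoundedWitness (G : Subgroup (Equiv.Perm A)) (k : ℕ)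
    (F : Set ((X : Type) × SigStructOn (OrbIdx G k) k X)) : Prop :=
  F.Finite ∧ (∀ p ∈ F, Finite p.1) ∧
    ∀ (X : Type), Finite X → ∀ SX : SigStructOn (OrbIdx G k) k X,
      ((∃ h : X → A, IsEmbOn SX (canonicalOn G k) h) ↔
        ∀ p ∈ F, ¬ ∃ h : p.1 → X, IsEmbOn p.2 SX h)

/-- The canonical `k`-ary structure of `G` is finitely bounded. -/
def FinitelyBounded (G : Subgroup (Equiv.Perm A)) (k : ℕ) : Prop :=
  ∃ F, FinBoundedWitness G k F

/-- `b_𝔹`: the least possible size of the largest structure in a set of bounds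
witnessing finite boundedness. -/
noncomputable def boundSize (G : Subgroup (Equiv.Perm A)) (k : ℕ) : ℕ :=
  sInf {b : ℕ | ∃ F, FinBoundedWitness G k F ∧ ∀ p ∈ F, Nat.card p.1 ≤ b}

/-! ### Primitive positive definability -/

/-- An atomic pp-condition on assignments `V → A`: a relation of `𝔸` applied to a
tuple of variables, or an equality between two variables. -/
inductive PPAtom (𝔸 : RelStruct A) (V : Type) : Type
  | rel (r : Σ n : ℕ, Set (Fin n → A)) (hr : r ∈ 𝔸.rels) (vars : Fin r.1 → V) : PPAtom 𝔸 V
  | eq (x y : V) : PPAtom 𝔸 V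

/-- Satisfaction of an atomic pp-condition. -/
def PPAtom.sat {𝔸 : RelStruct A} {V : Type} : PPAtom 𝔸 V → (V → A) → Prop
  | PPAtom.rel r _ vars => fun f => (fun i => f (vars i)) ∈ r.2
  | PPAtom.eq x y => fun f => f x = f y

/-- `Φ` is the set of satisfying assignments of a primitive positive formula over `𝔸`
with free variable set `V` (a finite conjunction of atoms, existentially projected). -/
def IsPPDefinable (𝔸 : RelStruct A) {V : Type} (Φ : Set (V → A)) : Prop :=
  ∃ (W : Type) (_ : Finite W) (ι : Type) (_ : Finite ι)
      (atoms : ι → PPAtom 𝔸 (V ⊕ W)),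
    Φ = {f | ∃ g : V ⊕ W → A, (∀ i, (atoms i).sat g) ∧ ∀ x, g (Sum.inl x) = f x}

/-! ### Polymorphisms and quasi Jónsson chains -/

/-- A unary operation preserves a relation. -/
def PreservesUn (f : A → A) {n : ℕ} (R : Set (Fin n → A)) : Prop :=
  ∀ t ∈ R, (fun i => f (t i)) ∈ R

/-- A binary operation preserves a relation. -/
def PreservesBin (f : A → A → A) {n : ℕ} (R : Set (Fin n → A)) : Prop :=
  ∀ t₁ t₂ : Fin n → A, t₁ ∈ R → t₂ ∈ R → (fun i => f (t₁ i) (t₂ i)) ∈ R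

/-- A ternary operation preserves a relation. -/
def PreservesTern (f : A → A → A → A) {n : ℕ} (R : Set (Fin n → A)) : Prop :=
  ∀ t₁ t₂ t₃ : Fin n → A, t₁ ∈ R → t₂ ∈ R → t₃ ∈ R →
    (fun i => f (t₁ i) (t₂ i) (t₃ i)) ∈ R

def IsUnPolymorphism (𝔸 : RelStruct A) (f : A → A) : Prop :=
  ∀ r ∈ 𝔸.rels, PreservesUn f r.2

def IsBinPolymorphism (𝔸 : RelStruct A) (f : A → A → A) : Prop :=
  ∀ r ∈ 𝔸.rels, PreservesBin f r.2

def IsTernPolymorphism (𝔸 : RelStruct A) (f : A → A → A → A) : Prop :=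
  ∀ r ∈ 𝔸.rels, PreservesTern f r.2

/-- `(J 1, …, J (2n+1))` is a chain of quasi Jónsson operations. -/
structure IsQuasiJonssonChain (A : Type) (n : ℕ) (J : ℕ → A → A → A → A) : Prop where
  first : ∀ x y : A, J 1 x x y = J 1 x x x
  middle : ∀ i, 1 ≤ i → i ≤ 2 * n + 1 → ∀ x y : A, J i x y x = J i x x x
  oddEven : ∀ i, 1 ≤ i → i ≤ n → ∀ x y : A, J (2 * i - 1) x y y = J (2 * i) x y y
  evenOdd : ∀ i, 1 ≤ i → i ≤ n → ∀ x y : A, J (2 * i) x x y = J (2 * i + 1) x x y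
  last : ∀ x y : A, J (2 * n + 1) x y y = J (2 * n + 1) y y y

/-- `𝔸` is preserved by a chain of quasi Jónsson operations. -/
def PreservedByQuasiJonsson (𝔸 : RelStruct A) : Prop :=
  ∃ (n : ℕ) (J : ℕ → A → A → A → A), IsQuasiJonssonChain A n J ∧
    ∀ i, 1 ≤ i → i ≤ 2 * n + 1 → IsTernPolymorphism 𝔸 (J i)

/-! ### ω-categoricity and model-complete cores -/

/-- `𝔸` is ω-categorical: its automorphism group is oligomorphic. -/
def IsOmegaCategorical (𝔸 : RelStruct A) : Prop :=
  ∀ k : ℕ, {O : Set (Fin k → A) |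
    ∃ t : Fin k → A, O = {s | ∃ g : Equiv.Perm A, IsAut 𝔸 g ∧ s = fun i => g (t i)}}.Finite

/-- `𝔸` is an ω-categorical model-complete core. -/
def IsModelCompleteCore (𝔸 : RelStruct A) : Prop :=
  IsOmegaCategorical 𝔸 ∧
    ∀ e : A → A, IsUnPolymorphism 𝔸 e →
      ∀ B : Set A, B.Finite → ∃ g : Equiv.Perm A, IsAut 𝔸 g ∧ ∀ b ∈ B, g b = e b

/-! ### Implications -/

/-- Projection of a set of assignments onto a tuple of variables. -/
def projTup {V : Type} {k : ℕ} (u : Fin k → V) (Φ : Set (V → A)) : Set (Fin k → A) :=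
  (fun f : V → A => f ∘ u) '' Φ

/-- `Φ` (the solution set of a pp-formula over `𝔸` with free variables `V`) is a
`(C,u,D,v)`-pre-implication: conditions (2)–(5) of the definition of an implication. -/
structure IsPreImplication (𝔸 : RelStruct A) {V : Type} {k m : ℕ}
    (C : Set (Fin k → A)) (u : Fin k → V)
    (D : Set (Fin m → A)) (v : Fin m → V) (Φ : Set (V → A)) : Prop where
  V_fin : Finite V
  pp : IsPPDefinable 𝔸 Φ
  u_inj : Function.Injective u
  v_inj : Function.Injective v
  k_lt : k < Nat.card V
  m_lt : m < Nat.card V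
  scopes : Set.range u ∪ Set.range v = Set.univ
  C_ne : C.Nonempty
  D_ne : D.Nonempty
  C_pp : IsPPDefinable 𝔸 C
  D_pp : IsPPDefinable 𝔸 D
  C_ssub : C ⊂ projTup u Φ
  D_ssub : D ⊂ projTup v Φ
  forward : ∀ f ∈ Φ, f ∘ u ∈ C → f ∘ v ∈ D
  onto : ∀ t ∈ D, ∃ f ∈ Φ, f ∘ u ∈ C ∧ f ∘ v = t

/-- `Φ` is a `(C,u,D,v)`-implication in `𝔸`. -/
structure IsImplication (𝔸 : RelStruct A) {V : Type} {k m : ℕ}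
    (C : Set (Fin k → A)) (u : Fin k → V)
    (D : Set (Fin m → A)) (v : Fin m → V) (Φ : Set (V → A))
    extends IsPreImplication 𝔸 C u D v Φ : Prop where
  nondiag : ∀ x y : V, x ≠ y → ∃ f ∈ Φ, f x ≠ f y

/-- A vertex of the `k`-ary injective implication graph of `𝔸`. -/
def InjImplVertex (𝔸 : RelStruct A) (k : ℕ)
    (p : Set (Fin k → A) × Set (Fin k → A)) : Prop :=
  p.2.Nonempty ∧ p.2 ⊂ p.1 ∧ IsPPDefinable 𝔸 p.1 ∧ IsPPDefinable 𝔸 p.2 ∧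
    ∀ t ∈ p.1, Function.Injective t

/-- An arc of the `k`-ary injective implication graph of `𝔸`. -/
def InjImplArc (𝔸 : RelStruct A) (k : ℕ)
    (p q : Set (Fin k → A) × Set (Fin k → A)) : Prop :=
  InjImplVertex 𝔸 k p ∧ InjImplVertex 𝔸 k q ∧ p ≠ q ∧
    ∃ (V : Type) (u v : Fin k → V) (Φ : Set (V → A)),
      IsImplication 𝔸 p.2 u q.2 v Φ ∧ (∀ f ∈ Φ, Function.Injective f) ∧
      projTup u Φ = p.1 ∧ projTup v Φ = q.1

/-- A directed graph (given by its arc relation) has a directed cycle. -/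
def HasDirectedCycle {α : Type*} (arc : α → α → Prop) : Prop :=
  ∃ (n : ℕ) (c : ℕ → α), 0 < n ∧ (∀ i < n, arc (c i) (c (i + 1))) ∧ c n = c 0

/-- `𝔸` is implicationally simple on injective instances: its `k`-ary injective
implication graph is acyclic. -/
def ImplSimpleOnInj (𝔸 : RelStruct A) (k : ℕ) : Prop :=
  ¬ HasDirectedCycle (InjImplArc 𝔸 k)

/-! ### Composition of implications -/

/-- The set of variables of the composition `φ₁ ∘ φ₂` (identification `v¹ = u²` being
realized inside a common ambient variable type). -/
def compDomain {V : Type} (V₁ V₂ : Set V) {k p : ℕ}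
    (u1 : Fin k → ↥V₁) (v2 : Fin p → ↥V₂) : Set V :=
  Set.range (fun i => (u1 i : V)) ∪ Set.range (fun i => (v2 i : V))

def compU {V : Type} (V₁ V₂ : Set V) {k p : ℕ}
    (u1 : Fin k → ↥V₁) (v2 : Fin p → ↥V₂) : Fin k → ↥(compDomain V₁ V₂ u1 v2) :=
  fun i => ⟨(u1 i : V), Set.mem_union_left _ ⟨i, rfl⟩⟩

def compV {V : Type} (V₁ V₂ : Set V) {k p : ℕ}
    (u1 : Fin k → ↥V₁) (v2 : Fin p → ↥V₂) : Fin p → ↥(compDomain V₁ V₂ u1 v2) :=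
  fun i => ⟨(v2 i : V), Set.mem_union_right _ ⟨i, rfl⟩⟩

/-- The solution set of the composition `φ₁ ∘ φ₂`: conjunction followed by existential
quantification of all variables outside `scope(u¹) ∪ scope(v²)`. -/
def compSet {V : Type} (V₁ V₂ : Set V) {k p : ℕ}
    (u1 : Fin k → ↥V₁) (v2 : Fin p → ↥V₂)
    (Φ₁ : Set (↥V₁ → A)) (Φ₂ : Set (↥V₂ → A)) :
    Set (↥(compDomain V₁ V₂ u1 v2) → A) :=
  {f | ∃ g : V → A, (fun x : ↥V₁ => g x) ∈ Φ₁ ∧ (fun x : ↥V₂ => g x) ∈ Φ₂ ∧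
        ∀ x : ↥(compDomain V₁ V₂ u1 v2), f x = g x}

/-! ### Complete implications and critical formulas -/

/-- The gluing relation identifying the `v`-variables of a first copy of `V` with the
`u`-variables of a second copy (used to form `φ ∘ φ`). -/
def glueRel {V : Type} {k : ℕ} (u v : Fin k → V) : (V ⊕ V) → (V ⊕ V) → Prop :=
  fun a b => ∃ i, a = Sum.inl (v i) ∧ b = Sum.inr (u i)

/-- The number of variables of `φ ∘ φ`. -/
noncomputable def compVarCount {V : Type} {k : ℕ} (u v : Fin k → V) : ℕ :=
  Nat.card ↥(Set.range (fun i => Quot.mk (glueRel u v) (Sum.inl (u i))) ∪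
      Set.range (fun i => Quot.mk (glueRel u v) (Sum.inr (v i))))

/-- An arc of the digraph `ℬ_φ` on the orbits contained in `proj_u(φ)`. -/
def OrbArc (G : Subgroup (Equiv.Perm A)) {V : Type} {k : ℕ}
    (u v : Fin k → V) (Φ : Set (V → A)) (O P : Set (Fin k → A)) : Prop :=
  IsOrbit G O ∧ IsOrbit G P ∧ O ⊆ projTup u Φ ∧ P ⊆ projTup u Φ ∧
    ∃ f ∈ Φ, f ∘ u ∈ O ∧ f ∘ v ∈ P

/-- `S` is a strongly connected component of the digraph `ℬ_φ`. -/
def IsSCC (G : Subgroup (Equiv.Perm A)) {V : Type} {k : ℕ}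
    (u v : Fin k → V) (Φ : Set (V → A)) (S : Set (Set (Fin k → A))) : Prop :=
  (∀ O ∈ S, IsOrbit G O ∧ O ⊆ projTup u Φ) ∧
  (∀ O ∈ S, ∀ P ∈ S, Relation.TransGen (OrbArc G u v Φ) O P) ∧
  (∀ S' : Set (Set (Fin k → A)), S ⊆ S' →
    (∀ O ∈ S', IsOrbit G O ∧ O ⊆ projTup u Φ) →
    (∀ O ∈ S', ∀ P ∈ S', Relation.TransGen (OrbArc G u v Φ) O P) → S' = S)

/-- The `(C,u,C,v)`-implication (with solution set `Φ`) is complete. -/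
structure IsComplete (G : Subgroup (Equiv.Perm A)) {V : Type} {k : ℕ}
    (u v : Fin k → V) (Φ : Set (V → A)) : Prop where
  card_comp : compVarCount u v = Nat.card V
  overlap : ∀ i, u i ∈ Set.range v → u i = v i
  scc_full : ∀ S, IsSCC G u v Φ S → ∀ O ∈ S, ∀ P ∈ S, ∃ f ∈ Φ, f ∘ u ∈ O ∧ f ∘ v ∈ P

/-- `Φ` is critical in `𝔸` over `(C,D,u,v)`. -/
structure IsCritical (𝔸 : RelStruct A) (G : Subgroup (Equiv.Perm A)) {V : Type} {k : ℕ}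
    (C D : Set (Fin k → A)) (u v : Fin k → V) (Φ : Set (V → A)) : Prop where
  card_V : Nat.card V = k + 1
  C_inj : ∀ t ∈ C, Function.Injective t
  D_inj : ∀ t ∈ D, Function.Injective t
  disj : Disjoint C D
  D_pp : IsPPDefinable 𝔸 D
  u0 : ∀ h : 0 < k, u ⟨0, h⟩ ∉ Set.range v
  v0 : ∀ h : 0 < k, v ⟨0, h⟩ ∉ Set.range u
  impl : IsImplication 𝔸 C u C v Φ
  complete : IsComplete G u v Φ
  full_C : ∀ f : V → A, f ∘ u ∈ C → f ∘ v ∈ C → f ∈ Φ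
  full_D : ∀ f : V → A, f ∘ u ∈ D → f ∘ v ∈ D → f ∈ Φ

/-- An injective orbital: an orbit of injective pairs. -/
def InjOrbital (G : Subgroup (Equiv.Perm A)) (O : Set (Fin 2 → A)) : Prop :=
  IsOrbit G O ∧ ∀ t ∈ O, Function.Injective t

/-! ### CSP instances and relational width -/

/-- A constraint on variables `V` over domain `A`. -/
structure Constraint (A : Type) (V : Type) where
  scope : Set V
  val : Set (↥scope → A)

variable {V : Type}

/-- The constraint arises from a relation of the template `𝔸` via an enumeration of
its scope. -/
def Constraint.FromTemplate (C : Constraint A V) (𝔸 : RelStruct A) : Prop :=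
  ∃ r ∈ 𝔸.rels, ∃ e : Fin r.1 ≃ ↥C.scope, C.val = {f | (fun i => f (e i)) ∈ r.2}

/-- The constraint arises from a pp-definable relation of arity at most
`max(ℓ, maximal arity of 𝔸)`. -/
def Constraint.FromPPExpansion (C : Constraint A V) (𝔸 : RelStruct A) (ℓ : ℕ) : Prop :=
  ∃ (n : ℕ) (R : Set (Fin n → A)), IsPPDefinable 𝔸 R ∧
    (n ≤ ℓ ∨ ∃ r ∈ 𝔸.rels, n ≤ r.1) ∧
    ∃ e : Fin n ≃ ↥C.scope, C.val = {f | (fun i => f (e i)) ∈ R}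

/-- Projection of a constraint onto a tuple of variables in its scope. -/
def Constraint.projOn (C : Constraint A V) {m : ℕ} (u : Fin m → V)
    (h : ∀ i, u i ∈ C.scope) : Set (Fin m → A) :=
  {t | ∃ f ∈ C.val, ∀ i, t i = f ⟨u i, h i⟩}

/-- An instance of a CSP: a finite set of constraints. -/
structure CSPInstance (A : Type) (V : Type) where
  cons : Set (Constraint A V)
  fin : cons.Finite

/-- The instance is an instance of `CSP(𝔸)`. -/
def CSPInstance.IsInstanceOf (I : CSPInstance A V) (𝔸 : RelStruct A) : Prop :=
  ∀ C ∈ I.cons, C.FromTemplate 𝔸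

def CSPInstance.IsSolution (I : CSPInstance A V) (f : V → A) : Prop :=
  ∀ C ∈ I.cons, (fun x : ↥C.scope => f x.1) ∈ C.val

def CSPInstance.NonTrivial (I : CSPInstance A V) : Prop :=
  ∀ C ∈ I.cons, C.val.Nonempty

/-- The instance is `(k,ℓ)`-minimal. -/
def CSPInstance.Minimal (I : CSPInstance A V) (k ℓ : ℕ) : Prop :=
  (∀ S : Set V, S.ncard ≤ ℓ → ∃ C ∈ I.cons, S ⊆ C.scope) ∧
  (∀ m, m ≤ k → ∀ u : Fin m → V, ∀ C₁ ∈ I.cons, ∀ C₂ ∈ I.cons,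
    ∀ (h₁ : ∀ i, u i ∈ C₁.scope) (h₂ : ∀ i, u i ∈ C₂.scope),
      C₁.projOn u h₁ = C₂.projOn u h₂)

/-- The instance is an instance of `CSP_inj`. -/
def CSPInstance.InjInstance (I : CSPInstance A V) : Prop :=
  ∀ C ∈ I.cons, ∀ f ∈ C.val, ∀ x y : ↥C.scope, (x : V) ≠ (y : V) → f x ≠ f y

/-- `𝔸` has relational width `(k,ℓ)`. -/
def HasRelWidth (𝔸 : RelStruct A) (k ℓ : ℕ) : Prop :=
  ∀ (V : Type), Finite V → ∀ I J : CSPInstance A V,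
    I.IsInstanceOf 𝔸 →
    (∀ C ∈ J.cons, C.FromPPExpansion 𝔸 ℓ) →
    (∀ f : V → A, I.IsSolution f ↔ J.IsSolution f) →
    J.Minimal k ℓ → J.NonTrivial → ∃ f, J.IsSolution f

/-- `CSP_inj(𝔸)` has relational width `(k,ℓ)`. -/
def HasRelWidthInj (𝔸 : RelStruct A) (k ℓ : ℕ) : Prop :=
  ∀ (V : Type), Finite V → ∀ I J : CSPInstance A V,
    I.IsInstanceOf 𝔸 → I.InjInstance →
    (∀ C ∈ J.cons, C.FromPPExpansion 𝔸 ℓ) →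
    (∀ f : V → A, I.IsSolution f ↔ J.IsSolution f) →
    J.Minimal k ℓ → J.NonTrivial → ∃ f, J.IsSolution f

end CSP

namespace CSP

/-!
The identities linking consecutive members of a quasi Jónsson chain, read at `x = y`, say that all
members share one diagonal `e`, and `e` is a unary polymorphism. If some unary polymorphism `f`
undoes `e` on `B`, then every `f ∘ Jᵢ` is idempotent on `B`, and composing on the left with one
fixed `f` preserves identities between values of the `Jᵢ`. In a model-complete core such an `f` is
the inverse of an automorphism agreeing with `e` on `B`.
-/

section

variable {A : Type} {𝔸 : RelStruct A}

theorem IsAut.symm {g : Equiv.Perm A} (hg : IsAut 𝔸 g) : IsAut 𝔸 g.symm := fun r hr t => by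
  simpa only [Equiv.apply_symm_apply] using (hg r hr fun i => g.symm (t i)).symm

theorem IsAut.isUnPolymorphism {g : Equiv.Perm A} (hg : IsAut 𝔸 g) : IsUnPolymorphism 𝔸 g :=
  fun r hr t => (hg r hr t).mp

theorem IsTernPolymorphism.diag {f : A → A → A → A} (hf : IsTernPolymorphism 𝔸 f) :
    IsUnPolymorphism 𝔸 fun x => f x x x :=
  fun r hr t ht => hf r hr t t t ht ht ht

theorem IsUnPolymorphism.comp_tern {f : A → A} {h : A → A → A → A}
    (hf : IsUnPolymorphism 𝔸 f) (hh : IsTernPolymorphism 𝔸 h) :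
    IsTernPolymorphism 𝔸 fun x y z => f (h x y z) :=
  fun r hr t₁ t₂ t₃ ht₁ ht₂ ht₃ => hf r hr _ (hh r hr t₁ t₂ t₃ ht₁ ht₂ ht₃)

theorem IsModelCompleteCore.exists_leftInvOn (hmc : IsModelCompleteCore 𝔸) {e : A → A}
    (he : IsUnPolymorphism 𝔸 e) {B : Set A} (hB : B.Finite) :
    ∃ f, IsUnPolymorphism 𝔸 f ∧ Set.LeftInvOn f e B := by
  obtain ⟨g, hg, hge⟩ := hmc.2 e he B hB
  exact ⟨g.symm, hg.symm.isUnPolymorphism, fun b hb => g.symm_apply_eq.mpr (hge b hb).symm⟩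

namespace IsQuasiJonssonChain

variable {n : ℕ} {J : ℕ → A → A → A → A}

theorem diag_succ (hJ : IsQuasiJonssonChain A n J) (x : A) {i : ℕ} (hi : 1 ≤ i)
    (hin : i ≤ 2 * n) : J (i + 1) x x x = J i x x x := by
  obtain ⟨k, rfl | rfl⟩ := Nat.even_or_odd' i
  · exact (hJ.evenOdd k (by lia) (by lia) x x).symm
  · exact (hJ.oddEven (k + 1) (by lia) (by lia) x x).symm

theorem diag_eq (hJ : IsQuasiJonssonChain A n J) (x : A) {i : ℕ} (hi : 1 ≤ i)
    (hin : i ≤ 2 * n + 1) : J i x x x = J 1 x x x := by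
  induction i, hi using Nat.le_induction with
  | base => rfl
  | succ i hi ih => exact (hJ.diag_succ x hi (by lia)).trans (ih (by lia))

theorem comp_left (hJ : IsQuasiJonssonChain A n J) (f : A → A) :
    IsQuasiJonssonChain A n fun i x y z => f (J i x y z) where
  first x y := congrArg f (hJ.first x y)
  middle i hi hin x y := congrArg f (hJ.middle i hi hin x y)
  oddEven i hi hin x y := congrArg f (hJ.oddEven i hi hin x y)
  evenOdd i hi hin x y := congrArg f (hJ.evenOdd i hi hin x y)
  last x y := congrArg f (hJ.last x y)

end IsQuasiJonssonChain

theorem statement_2_general (B : Set A)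
    (hcore : ∀ e, IsUnPolymorphism 𝔸 e → ∃ f, IsUnPolymorphism 𝔸 f ∧ Set.LeftInvOn f e B)
    {n : ℕ} {J : ℕ → A → A → A → A} (hJ : IsQuasiJonssonChain A n J)
    (hpol : ∀ i, 1 ≤ i → i ≤ 2 * n + 1 → IsTernPolymorphism 𝔸 (J i)) :
    ∃ J' : ℕ → A → A → A → A, IsQuasiJonssonChain A n J' ∧
      (∀ i, 1 ≤ i → i ≤ 2 * n + 1 → IsTernPolymorphism 𝔸 (J' i)) ∧
      (∀ i, 1 ≤ i → i ≤ 2 * n + 1 → ∀ b ∈ B, J' i b b b = b) := by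
  have diag_pol : IsUnPolymorphism 𝔸 fun x => J 1 x x x := (hpol 1 le_rfl (by lia)).diag
  obtain ⟨f, hf, hfJ⟩ := hcore _ diag_pol
  refine ⟨fun i x y z => f (J i x y z), hJ.comp_left f,
    fun i hi hin => hf.comp_tern (hpol i hi hin), fun i hi hin b hb => ?_⟩
  calc f (J i b b b) = f (J 1 b b b) := congrArg f (hJ.diag_eq b hi hin)
    _ = b := hfJ hb

end

/-- in an ω-categorical model-complete core preserved by a chain of quasi
Jónsson operations, the chain can be chosen idempotent on any prescribed finite set. -/
theorem statement_2 {A : Type} (𝔸 : RelStruct A) (hmc : IsModelCompleteCore 𝔸)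
    (n : ℕ) (J : ℕ → A → A → A → A)
    (hJ : IsQuasiJonssonChain A n J)
    (hpol : ∀ i, 1 ≤ i → i ≤ 2 * n + 1 → IsTernPolymorphism 𝔸 (J i))
    (B : Set A) (hB : B.Finite) :
    ∃ J' : ℕ → A → A → A → A, IsQuasiJonssonChain A n J' ∧
      (∀ i, 1 ≤ i → i ≤ 2 * n + 1 → IsTernPolymorphism 𝔸 (J' i)) ∧
      (∀ i, 1 ≤ i → i ≤ 2 * n + 1 → ∀ b ∈ B, J' i b b b = b) :=
  statement_2_general B (fun _ he => hmc.exists_leftInvOn he hB) hJ hpol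

end CSP
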